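/- arXiv:2504.20881 — 2 statements merged into one kernel-verified Lean document; each statement's English description precedes it below -/
import Mathlib

section
/- Let X₀⁺ be a proper subshift of the one-sided full shift X⁺ = 𝒜^ℕ whose word complexity grows at most polynomially (there exist C > 0 and q ≥ 1 with |L_j(X₀⁺)| ≤ C j^q for all j ≥ 1) and which is the smallest subshift containing the supports of all shift-invariant measures carried by X₀⁺. Let (a_j)_{j≥0} be a decreasing sequence of positive reals converging to 0 with a_j ≥ (log j)²/j for all j ≥ 1, and define φ⁺ : X⁺ → ℝ by φ⁺(x) = 0 if x ∈ X₀⁺ and φ⁺(x) = −a_j if dist(x, X₀⁺) = 2^{−j}. Then φ⁺ freezes on X₀⁺: φ⁺ has a freezing phase transition at some β_c > 0, and X₀⁺ is the smallest subshift containing the supports of all measures in ZTA(φ⁺). -/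
open MeasureTheory Filter Topology
open scoped ENNReal Classical

namespace Freezing

/-- The one-sided configuration space `X⁺ = 𝒜^ℕ`. -/
abbrev Cfg1 (A : Type) : Type := ℕ → A

section Defs

variable {A : Type} [Fintype A] [TopologicalSpace A] [DiscreteTopology A]
  [MeasurableSpace A] [BorelSpace A]

/-- The one-sided shift `σ(x)_i = x_{i+1}`. -/
def shift1 (x : Cfg1 A) : Cfg1 A := fun i => x (i + 1)

/-- Shift-invariance of a measure. -/
def Invariant1 (μ : Measure (Cfg1 A)) : Prop := Measure.map shift1 μ = μ

/-- The cylinder set `[w]` of a word `w` of length `n`. -/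
def cyl1 (n : ℕ) (w : Fin n → A) : Set (Cfg1 A) := { x | ∀ i : Fin n, x i = w i }

/-- Measure-theoretic entropy `h(μ) = inf_{n ≥ 1} (1/n) Σ_w (-μ[w] log μ[w])`. -/
noncomputable def entropy1 (μ : Measure (Cfg1 A)) : ℝ :=
  ⨅ n : {n : ℕ // 1 ≤ n},
    (n.1 : ℝ)⁻¹ * ∑ w : Fin n.1 → A, Real.negMulLog (μ (cyl1 n.1 w)).toReal

/-- Pressure `p_φ(β) = sup { h(μ) + β ∫ φ dμ }` over shift-invariant probability measures. -/
noncomputable def pressure1 (φ : Cfg1 A → ℝ) (β : ℝ) : ℝ :=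
  sSup { r | ∃ μ : Measure (Cfg1 A), IsProbabilityMeasure μ ∧ Invariant1 μ ∧
    r = entropy1 μ + β * ∫ x, φ x ∂μ }

/-- The set of equilibrium states of `βφ`. -/
def ES1 (φ : Cfg1 A → ℝ) (β : ℝ) : Set (Measure (Cfg1 A)) :=
  { μ | IsProbabilityMeasure μ ∧ Invariant1 μ ∧
      entropy1 μ + β * ∫ x, φ x ∂μ = pressure1 φ β }

/-- `φ` has a freezing phase transition at `βc`. -/
def FreezingPT1 (φ : Cfg1 A → ℝ) (βc : ℝ) : Prop :=
  (∀ β β' : ℝ, βc < β → βc < β' → ES1 φ β = ES1 φ β') ∧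
  (∀ β β' : ℝ, β < βc → βc < β' → ES1 φ β ≠ ES1 φ β')

/-- The zero-temperature accumulation points of `φ`. -/
def ZTA1 (φ : Cfg1 A → ℝ) : Set (Measure (Cfg1 A)) :=
  { μ | IsProbabilityMeasure μ ∧ Invariant1 μ ∧
      ∃ (β : ℕ → ℝ) (μs : ℕ → Measure (Cfg1 A)),
        Tendsto β atTop atTop ∧ (∀ k, μs k ∈ ES1 φ (β k)) ∧
        ∀ f : Cfg1 A → ℝ, Continuous f →
          Tendsto (fun k => ∫ x, f x ∂(μs k)) atTop (𝓝 (∫ x, f x ∂μ)) }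

/-- A one-sided subshift: nonempty, closed, shift-invariant. -/
def IsSubshift1 (X₀ : Set (Cfg1 A)) : Prop :=
  X₀.Nonempty ∧ IsClosed X₀ ∧ ∀ x ∈ X₀, shift1 x ∈ X₀

/-- The language `L_n(X₀)`: words of length `n` appearing at the origin of points of `X₀`. -/
def lang1 (X₀ : Set (Cfg1 A)) (n : ℕ) : Set (Fin n → A) :=
  { w | ∃ x ∈ X₀, ∀ i : Fin n, x i = w i }

/-- Topological entropy `h_top(X₀) = inf_{n ≥ 1} (1/n) log |L_n(X₀)|`. -/
noncomputable def topEnt1 (X₀ : Set (Cfg1 A)) : ℝ :=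
  ⨅ n : {n : ℕ // 1 ≤ n}, (n.1 : ℝ)⁻¹ * Real.log ((lang1 X₀ n.1).ncard)

/-- A measure of maximal entropy on the subshift `X₀`. -/
def IsMME1 (X₀ : Set (Cfg1 A)) (μ : Measure (Cfg1 A)) : Prop :=
  IsProbabilityMeasure μ ∧ Invariant1 μ ∧ μ X₀ = 1 ∧ entropy1 μ = topEnt1 X₀

/-- The metric `dist(x,y) = 2^{-min{i : x_i ≠ y_i}}`. -/
noncomputable def dist1 (x y : Cfg1 A) : ℝ :=
  if x = y then 0 else (2 : ℝ) ^ (-((sInf { i : ℕ | x i ≠ y i } : ℕ) : ℤ))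

/-- Distance from a point to a subshift. -/
noncomputable def distToSub1 (X₀ : Set (Cfg1 A)) (x : Cfg1 A) : ℝ :=
  sInf { r | ∃ y ∈ X₀, r = dist1 x y }

/-- The (topological) support of a measure: points all of whose open neighbourhoods have
positive measure. -/
def supp1 (μ : Measure (Cfg1 A)) : Set (Cfg1 A) :=
  { x | ∀ U : Set (Cfg1 A), IsOpen U → x ∈ U → 0 < μ U }

end Defs


section Helpers

set_option linter.unusedSectionVars false

variable {A : Type} [Fintype A] [TopologicalSpace A] [DiscreteTopology A]
  [MeasurableSpace A] [BorelSpace A]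

def pre (k : ℕ) (x : Cfg1 A) : Fin k → A := fun i => x i

def Adm (X₀ : Set (Cfg1 A)) (k : ℕ) (x : Cfg1 A) : Prop := pre k x ∈ lang1 X₀ k

def NN : ℕ → ℕ
  | 0 => 1
  | r + 1 => NN r + NN r

lemma NN_eq (r : ℕ) : NN r = 2 ^ r := by
  induction r with
  | zero => rfl
  | succ r ih => rw [NN, ih, pow_succ]; ring

noncomputable def TT (X₀ : Set (Cfg1 A)) (γ : ℝ) : (r : ℕ) → (Fin (NN r) → A) → ℝ
  | 0, _ => γ
  | r + 1, w => if w ∈ lang1 X₀ (NN r + NN r) then γ * (r + 2) else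
      TT X₀ γ r (fun i => w (Fin.castAdd (NN r) i)) + TT X₀ γ r (fun i => w (Fin.natAdd (NN r) i))

def shn (m : ℕ) (x : Cfg1 A) : Cfg1 A := fun i => x (m + i)

noncomputable def BB (X₀ : Set (Cfg1 A)) (γ : ℝ) : ℕ → Cfg1 A → ℝ
  | 0, _ => 0
  | r + 1, x => (if Adm X₀ (NN (r+1)) x then 0 else 2 * γ * (r + 1)) +
      (BB X₀ γ r x + BB X₀ γ r (shn (NN r) x))

noncomputable def gg (X₀ : Set (Cfg1 A)) (j : ℕ) (x : Cfg1 A) : ℝ :=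
  if Adm X₀ (NN (j+1)) x then 0 else ((j : ℝ) + 1) / 2 ^ j

lemma measurable_pre (k : ℕ) : Measurable (pre k : Cfg1 A → _) := by
  unfold pre; fun_prop

lemma measurable_shift1 : Measurable (shift1 : Cfg1 A → Cfg1 A) := by
  unfold shift1; fun_prop

lemma mp_shn {μ : Measure (Cfg1 A)} (h : Invariant1 μ) (m : ℕ) :
    MeasurePreserving (shn m) μ μ := by
  have h1 : MeasurePreserving (shift1 : Cfg1 A → Cfg1 A) μ μ := ⟨measurable_shift1, h⟩
  induction m with
  | zero =>
    have : (shn 0 : Cfg1 A → Cfg1 A) = id := by funext x i; simp [shn]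
    rw [this]; exact MeasurePreserving.id μ
  | succ m ih =>
    have : (shn (m+1) : Cfg1 A → Cfg1 A) = shift1 ∘ shn m := by
      funext x i; simp only [shn, shift1, Function.comp]; congr 1; ring
    rw [this]; exact h1.comp ih

lemma integrable_pre {k : ℕ} (μ : Measure (Cfg1 A)) [IsProbabilityMeasure μ]
    (f : (Fin k → A) → ℝ) : Integrable (fun x => f (pre k x)) μ := by
  have hm : Measurable (fun x : Cfg1 A => f (pre k x)) :=
    (Measurable.of_discrete (f := f)).comp (measurable_pre k)
  refine Integrable.of_bound hm.aestronglyMeasurable (∑ w, ‖f w‖) (ae_of_all _ fun x => ?_)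
  exact Finset.single_le_sum (f := fun w => ‖f w‖) (fun _ _ => norm_nonneg _) (Finset.mem_univ _)

lemma integral_pre {k : ℕ} (μ : Measure (Cfg1 A)) [IsProbabilityMeasure μ]
    (f : (Fin k → A) → ℝ) :
    ∫ x, f (pre k x) ∂μ = ∑ w, (μ (cyl1 k w)).toReal * f w := by
  have hp := measurable_pre (A := A) k
  have : IsProbabilityMeasure (μ.map (pre k)) :=
    Measure.isProbabilityMeasure_map hp.aemeasurable
  have := integral_map (μ := μ) hp.aemeasurable (f := f)
    (Measurable.of_discrete (f := f)).aestronglyMeasurable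
  rw [← this, integral_fintype (Integrable.of_finite)]
  refine Finset.sum_congr rfl fun w _ => ?_
  rw [smul_eq_mul, measureReal_def, Measure.map_apply hp (measurableSet_singleton w)]
  congr 3
  ext x
  simp [pre, cyl1, funext_iff]

lemma integrable_BB (X₀ : Set (Cfg1 A)) (γ : ℝ) {μ : Measure (Cfg1 A)} [IsProbabilityMeasure μ]
    (h : Invariant1 μ) (r : ℕ) : Integrable (BB X₀ γ r) μ := by
  induction r with
  | zero => exact integrable_zero _ _ _
  | succ r ih =>
    refine Integrable.add ?_ (ih.add ?_)
    · exact integrable_pre μ (fun w => if w ∈ lang1 X₀ (NN (r+1)) then 0 else 2 * γ * (r + 1))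
    · exact (mp_shn h (NN r)).integrable_comp_of_integrable ih

lemma integrable_gg (X₀ : Set (Cfg1 A)) (μ : Measure (Cfg1 A)) [IsProbabilityMeasure μ]
    (j : ℕ) : Integrable (gg X₀ j) μ :=
  integrable_pre μ (fun w => if w ∈ lang1 X₀ (NN (j+1)) then 0 else ((j : ℝ) + 1) / 2 ^ j)

lemma integral_BB (X₀ : Set (Cfg1 A)) (γ : ℝ) {μ : Measure (Cfg1 A)} [IsProbabilityMeasure μ]
    (h : Invariant1 μ) (r : ℕ) :
    ∫ x, BB X₀ γ r x ∂μ = 2 ^ r * (γ * ∫ x, ∑ j ∈ Finset.range r, gg X₀ j x ∂μ) := by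
  induction r with
  | zero => simp [BB]
  | succ r ih =>
    have e1 : ∀ x, (if Adm X₀ (NN (r+1)) x then 0 else 2 * γ * (r + 1)) =
        2 ^ (r+1) * γ * gg X₀ r x := by
      intro x; unfold gg; split_ifs
      · simp
      · field_simp
        ring
    have hs := mp_shn h (NN r)
    have hB := integrable_BB X₀ γ h r
    have hB' : Integrable (fun x => BB X₀ γ r (shn (NN r) x)) μ :=
      hs.integrable_comp_of_integrable hB
    have e2 : ∫ x, BB X₀ γ r (shn (NN r) x) ∂μ = ∫ x, BB X₀ γ r x ∂μ := by
      have h3 := integral_map (μ := μ) hs.measurable.aemeasurable (f := BB X₀ γ r)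
        (by rw [hs.map_eq]; exact hB.aestronglyMeasurable)
      rw [hs.map_eq] at h3
      exact h3.symm
    simp only [BB, e1, Finset.sum_range_succ]
    have hBB : Integrable (fun x => BB X₀ γ r x + BB X₀ γ r (shn (NN r) x)) μ := hB.add hB'
    rw [integral_add ((integrable_gg X₀ μ r).const_mul _) hBB, integral_add hB hB', e2, ih,
      integral_add (integrable_finsetSum _ fun j _ => integrable_gg X₀ μ j) (integrable_gg X₀ μ r),
      integral_const_mul]
    ring

lemma TT_le (X₀ : Set (Cfg1 A)) {γ : ℝ} (hγ : 0 ≤ γ) (r : ℕ) :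
    ∀ x, 0 ≤ BB X₀ γ r x ∧ TT X₀ γ r (pre (NN r) x) ≤ γ * (r + 1) + BB X₀ γ r x := by
  induction r with
  | zero => intro x; simp [TT, BB]
  | succ r ih =>
    intro x
    have h1 := ih x
    have h2 := ih (shn (NN r) x)
    have hb : 0 ≤ 2 * γ * (r + 1) := by positivity
    constructor
    · simp only [BB]
      split_ifs
      · linarith [h1.1, h2.1]
      · linarith [h1.1, h2.1]
    · have e1 : (fun i => pre (NN (r+1)) x (Fin.castAdd (NN r) i)) = pre (NN r) x := rfl
      have e2 : (fun i => pre (NN (r+1)) x (Fin.natAdd (NN r) i)) = pre (NN r) (shn (NN r) x) := by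
        funext i; simp [pre, shn, add_comm]
      by_cases hA : Adm X₀ (NN (r+1)) x
      · have hA' : pre (NN (r+1)) x ∈ lang1 X₀ (NN r + NN r) := hA
        simp only [TT, BB, if_pos hA]
        rw [if_pos hA']
        push_cast
        nlinarith [h1.1, h2.1]
      · have hA' : ¬ pre (NN (r+1)) x ∈ lang1 X₀ (NN r + NN r) := hA
        simp only [TT, BB, if_neg hA]
        rw [if_neg hA', e1, e2]
        push_cast
        nlinarith [h1.2, h2.2, h1.1, h2.1]

lemma sum_exp_TT (X₀ : Set (Cfg1 A)) {γ : ℝ}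
    (h0 : (Fintype.card A : ℝ) * Real.exp (-γ) ≤ 1 / 2)
    (hL : ∀ r : ℕ, ((lang1 X₀ (NN (r+1))).ncard : ℝ) * Real.exp (-(γ * (r + 2))) ≤ 1 / 4) (r : ℕ) :
    ∑ w, Real.exp (-TT X₀ γ r w) ≤ 1 / 2 := by
  induction r with
  | zero =>
    have : Fintype.card (Fin (NN 0) → A) = Fintype.card A := by
      change Fintype.card (Fin 1 → A) = _
      rw [Fintype.card_fun]; simp
    simp only [TT, Finset.sum_const, Finset.card_univ, this, nsmul_eq_mul]
    exact h0
  | succ r ih =>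
    have hnn : 0 ≤ ∑ w, Real.exp (-TT X₀ γ r w) := Finset.sum_nonneg fun _ _ => (Real.exp_pos _).le
    have key : ∀ w : Fin (NN (r+1)) → A, Real.exp (-TT X₀ γ (r+1) w) ≤
        (if w ∈ lang1 X₀ (NN (r+1)) then Real.exp (-(γ * (r + 2))) else 0) +
        Real.exp (-TT X₀ γ r (fun i => w (Fin.castAdd (NN r) i))) *
        Real.exp (-TT X₀ γ r (fun i => w (Fin.natAdd (NN r) i))) := by
      intro w
      by_cases hw : w ∈ lang1 X₀ (NN (r+1))
      · have hw' : w ∈ lang1 X₀ (NN r + NN r) := hw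
        simp only [TT]
        rw [if_pos hw, if_pos hw']
        have : 0 ≤ Real.exp (-TT X₀ γ r (fun i => w (Fin.castAdd (NN r) i))) *
          Real.exp (-TT X₀ γ r (fun i => w (Fin.natAdd (NN r) i))) := by positivity
        linarith
      · have hw' : ¬ w ∈ lang1 X₀ (NN r + NN r) := hw
        simp only [TT]
        rw [if_neg hw, if_neg hw', zero_add, ← Real.exp_add]
        apply le_of_eq; congr 1; ring
    refine (Finset.sum_le_sum fun w _ => key w).trans ?_
    rw [Finset.sum_add_distrib]
    have p1 : ∑ w, (if w ∈ lang1 X₀ (NN (r+1)) then Real.exp (-(γ * (r + 2))) else 0) ≤ 1 / 4 := by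
      refine le_trans (le_of_eq ?_) (hL r)
      rw [← Finset.sum_filter, Finset.sum_const, nsmul_eq_mul]
      congr 2
      rw [Set.ncard_eq_toFinset_card']
      congr 1
      ext w; simp
    have p2 : ∑ w : Fin (NN (r+1)) → A, Real.exp (-TT X₀ γ r (fun i => w (Fin.castAdd (NN r) i))) *
        Real.exp (-TT X₀ γ r (fun i => w (Fin.natAdd (NN r) i))) =
        (∑ w, Real.exp (-TT X₀ γ r w)) * (∑ w, Real.exp (-TT X₀ γ r w)) := by
      rw [Finset.sum_mul_sum, ← Fintype.sum_prod_type']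
      exact Equiv.sum_comp (Fin.appendEquiv (α := A) (NN r) (NN r)).symm
        (fun p => Real.exp (-TT X₀ γ r p.1) * Real.exp (-TT X₀ γ r p.2))
    rw [p2]
    nlinarith

lemma toReal_nn_le (μ : Measure (Cfg1 A)) [IsProbabilityMeasure μ] (s : Set (Cfg1 A)) :
    0 ≤ (μ s).toReal ∧ (μ s).toReal ≤ 1 := by
  refine ⟨ENNReal.toReal_nonneg, ?_⟩
  exact measureReal_le_one (μ := μ)

lemma ent_term_nonneg (μ : Measure (Cfg1 A)) [IsProbabilityMeasure μ] (n : ℕ) :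
    0 ≤ (n : ℝ)⁻¹ * ∑ w : Fin n → A, Real.negMulLog (μ (cyl1 n w)).toReal := by
  refine mul_nonneg (by positivity) (Finset.sum_nonneg fun w _ => ?_)
  exact Real.negMulLog_nonneg (toReal_nn_le μ _).1 (toReal_nn_le μ _).2

lemma entropy_nonneg (μ : Measure (Cfg1 A)) [IsProbabilityMeasure μ] : 0 ≤ entropy1 μ :=
  Real.iInf_nonneg fun n => ent_term_nonneg μ n.1

lemma entropy_le (μ : Measure (Cfg1 A)) [IsProbabilityMeasure μ] (n : ℕ) (hn : 1 ≤ n) :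
    entropy1 μ ≤ (n : ℝ)⁻¹ * ∑ w : Fin n → A, Real.negMulLog (μ (cyl1 n w)).toReal :=
  ciInf_le (f := fun n : {n : ℕ // 1 ≤ n} =>
    (n.1 : ℝ)⁻¹ * ∑ w : Fin n.1 → A, Real.negMulLog (μ (cyl1 n.1 w)).toReal)
    ⟨0, by rintro _ ⟨m, rfl⟩; exact ent_term_nonneg μ m.1⟩ ⟨n, hn⟩

lemma gibbs_term (p t : ℝ) (hp : 0 ≤ p) : Real.negMulLog p ≤ p * t + (Real.exp (-t) - p) := by
  rcases hp.eq_or_lt with rfl | hp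
  · simp [Real.exp_nonneg]
  · have h := Real.log_le_sub_one_of_pos (x := Real.exp (-t) / p) (by positivity)
    rw [Real.log_div (by positivity) (by positivity), Real.log_exp] at h
    have h2 := mul_le_mul_of_nonneg_left h hp.le
    have h3 : p * (Real.exp (-t) / p - 1) = Real.exp (-t) - p := by field_simp
    rw [h3] at h2
    unfold Real.negMulLog
    nlinarith

lemma sum_cyl (μ : Measure (Cfg1 A)) [IsProbabilityMeasure μ] (n : ℕ) :
    ∑ w : Fin n → A, (μ (cyl1 n w)).toReal = 1 := by
  have := integral_pre (k := n) μ (fun _ => 1)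
  simpa using this.symm

lemma gibbs (μ : Measure (Cfg1 A)) [IsProbabilityMeasure μ] (n : ℕ) (T : (Fin n → A) → ℝ)
    (hT : ∑ w, Real.exp (-T w) ≤ 1) :
    ∑ w : Fin n → A, Real.negMulLog (μ (cyl1 n w)).toReal ≤ ∫ x, T (pre n x) ∂μ := by
  rw [integral_pre]
  refine (Finset.sum_le_sum fun w _ => gibbs_term _ (T w) (toReal_nn_le μ _).1).trans ?_
  rw [Finset.sum_add_distrib, Finset.sum_sub_distrib, sum_cyl]
  linarith

lemma entropy_le_gg (X₀ : Set (Cfg1 A)) {γ : ℝ} (hγ : 0 ≤ γ)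
    (h0 : (Fintype.card A : ℝ) * Real.exp (-γ) ≤ 1 / 2)
    (hL : ∀ r : ℕ, ((lang1 X₀ (NN (r+1))).ncard : ℝ) * Real.exp (-(γ * (r + 2))) ≤ 1 / 4)
    {μ : Measure (Cfg1 A)} [IsProbabilityMeasure μ]
    (h : Invariant1 μ) (r : ℕ) :
    entropy1 μ ≤ γ * ((r + 1) / 2 ^ r) + γ * ∫ x, ∑ j ∈ Finset.range r, gg X₀ j x ∂μ := by
  have hn : 1 ≤ NN r := by rw [NN_eq]; exact Nat.one_le_two_pow
  refine (entropy_le μ (NN r) hn).trans ?_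
  have h1 := gibbs μ (NN r) (TT X₀ γ r) ((sum_exp_TT X₀ h0 hL r).trans (by norm_num))
  have h2 : ∫ x, TT X₀ γ r (pre (NN r) x) ∂μ ≤ ∫ x, (γ * (r + 1) + BB X₀ γ r x) ∂μ :=
    integral_mono (integrable_pre μ _) ((integrable_const _).add (integrable_BB X₀ γ h r))
      (fun x => (TT_le X₀ hγ r x).2)
  rw [integral_add (integrable_const _) (integrable_BB X₀ γ h r), integral_BB X₀ γ h] at h2
  simp only [integral_const, probReal_univ, smul_eq_mul, one_mul] at h2
  rw [inv_mul_le_iff₀ (by exact_mod_cast hn)]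
  refine (h1.trans h2).trans (le_of_eq ?_)
  rw [NN_eq]; push_cast
  field_simp

end Helpers

section Helpers2

set_option linter.unusedSectionVars false

variable {A : Type} [Fintype A] [TopologicalSpace A] [DiscreteTopology A]
  [MeasurableSpace A] [BorelSpace A]

lemma adm_iff {X₀ : Set (Cfg1 A)} {k : ℕ} {x : Cfg1 A} :
    Adm X₀ k x ↔ ∃ y ∈ X₀, ∀ i < k, y i = x i := by
  constructor
  · rintro ⟨y, hy, h⟩
    exact ⟨y, hy, fun i hi => h ⟨i, hi⟩⟩
  · rintro ⟨y, hy, h⟩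
    exact ⟨y, hy, fun i => h i i.2⟩

lemma adm_mono {X₀ : Set (Cfg1 A)} {k l : ℕ} {x : Cfg1 A} (hkl : k ≤ l) (h : Adm X₀ l x) :
    Adm X₀ k x := by
  rw [adm_iff] at *
  obtain ⟨y, hy, h⟩ := h
  exact ⟨y, hy, fun i hi => h i (hi.trans_le hkl)⟩

lemma adm_congr {X₀ : Set (Cfg1 A)} {k : ℕ} {x y : Cfg1 A} (hxy : ∀ i < k, y i = x i) :
    Adm X₀ k x ↔ Adm X₀ k y := by
  have : pre k x = pre k y := by funext i; exact (hxy i i.2).symm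
  unfold Adm; rw [this]

lemma adm_of_mem {X₀ : Set (Cfg1 A)} {k : ℕ} {x : Cfg1 A} (h : x ∈ X₀) : Adm X₀ k x :=
  adm_iff.2 ⟨x, h, fun _ _ => rfl⟩

lemma exists_not_adm {X₀ : Set (Cfg1 A)} (hc : IsClosed X₀) {x : Cfg1 A} (h : x ∉ X₀) :
    ∃ k, ¬ Adm X₀ k x := by
  obtain ⟨I, u, hu, hs⟩ := isOpen_pi_iff.1 hc.isOpen_compl x h
  refine ⟨I.sup id + 1, fun hA => ?_⟩
  obtain ⟨y, hy, hyx⟩ := adm_iff.1 hA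
  refine hs (a := y) ?_ hy
  intro i hi
  rw [hyx i (Nat.lt_succ_of_le (Finset.le_sup (f := id) hi))]
  exact (hu i hi).2

lemma exists_len {X₀ : Set (Cfg1 A)} (hne : X₀.Nonempty) (hc : IsClosed X₀) {x : Cfg1 A}
    (h : x ∉ X₀) :
    ∃ l : ℕ, (∀ k, Adm X₀ k x ↔ k ≤ l) ∧ distToSub1 X₀ x = (2 : ℝ) ^ (-(l : ℤ)) := by
  have hex := exists_not_adm hc h
  have h0 : Adm X₀ 0 x := by
    obtain ⟨y, hy⟩ := hne
    exact adm_iff.2 ⟨y, hy, fun i hi => absurd hi (Nat.not_lt_zero i)⟩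
  obtain ⟨l, hl⟩ : ∃ l, Nat.find hex = l + 1 := by
    refine Nat.exists_eq_succ_of_ne_zero fun he => ?_
    exact Nat.find_spec hex (he ▸ h0)
  have hiff : ∀ k, Adm X₀ k x ↔ k ≤ l := by
    intro k
    constructor
    · intro hk
      by_contra hlt
      exact Nat.find_spec hex (adm_mono (by omega) hk)
    · intro hk
      exact not_not.1 (Nat.find_min hex (by omega))
  refine ⟨l, hiff, ?_⟩
  have hd : ∀ y ∈ X₀, dist1 x y = (2 : ℝ) ^ (-((sInf { i : ℕ | x i ≠ y i } : ℕ) : ℤ)) := by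
    intro y hy
    unfold dist1
    rw [if_neg]
    rintro rfl; exact h hy
  have hagree : ∀ (y : Cfg1 A), ∀ i < sInf { i : ℕ | x i ≠ y i }, y i = x i := by
    intro y i hi
    have := Nat.notMem_of_lt_sInf hi
    simpa [eq_comm] using this
  have hle : ∀ y ∈ X₀, sInf { i : ℕ | x i ≠ y i } ≤ l := fun y hy =>
    (hiff _).1 (adm_iff.2 ⟨y, hy, hagree y⟩)
  apply IsLeast.csInf_eq
  constructor
  · obtain ⟨y, hy, hyx⟩ := adm_iff.1 ((hiff l).2 le_rfl)
    refine ⟨y, hy, ?_⟩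
    rw [hd y hy]
    congr 3
    apply le_antisymm _ (hle y hy)
    apply le_csInf
    · by_contra hemp
      apply h
      have : x = y := by
        funext i
        by_contra hi
        exact hemp ⟨i, hi⟩
      rwa [this]
    · intro i hi
      by_contra hlt
      exact hi (hyx i (by omega)).symm
  · rintro r ⟨y, hy, rfl⟩
    rw [hd y hy]
    apply zpow_le_zpow_right₀ (by norm_num)
    have := hle y hy
    omega

lemma tail_sum (l : ℕ) (r : ℕ) :
    ∑ j ∈ Finset.range r, (if 2 ^ (j+1) ≤ l then (0 : ℝ) else ((j : ℝ) + 1) / 2 ^ j) ≤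
      ((Nat.log 2 l : ℝ) + 2) * 2 / 2 ^ (Nat.log 2 l) -
        (if Nat.log 2 l ≤ r then ((r : ℝ) + 2) * 2 / 2 ^ r else
          ((Nat.log 2 l : ℝ) + 2) * 2 / 2 ^ (Nat.log 2 l)) := by
  have hl : ∀ j, j < Nat.log 2 l → 2 ^ (j+1) ≤ l := by
    intro j hj
    have : l ≠ 0 := by rintro rfl; simp at hj
    exact (Nat.pow_le_pow_right (by norm_num) hj).trans (Nat.pow_log_le_self 2 this)
  induction r with
  | zero =>
    simp only [Finset.range_zero, Finset.sum_empty]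
    split_ifs with h
    · have : Nat.log 2 l = 0 := by omega
      rw [this]; simp
    · simp
  | succ r ih =>
    rw [Finset.sum_range_succ]
    refine (add_le_add_left ih _).trans ?_
    by_cases h1 : Nat.log 2 l ≤ r
    · rw [if_pos h1, if_pos (show Nat.log 2 l ≤ r + 1 by omega)]
      have : (if 2 ^ (r+1) ≤ l then (0 : ℝ) else ((r : ℝ) + 1) / 2 ^ r) ≤ ((r : ℝ) + 1) / 2 ^ r := by
        split_ifs
        · positivity
        · exact le_rfl
      have e : ((r : ℝ) + 2) * 2 / 2 ^ r - (((r + 1 : ℕ) : ℝ) + 2) * 2 / 2 ^ (r+1)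
          = ((r : ℝ) + 1) / 2 ^ r := by
        push_cast; rw [pow_succ]; field_simp; ring
      linarith
    · rw [if_neg h1, if_pos (hl r (by omega))]
      split_ifs with h2
      · have : Nat.log 2 l = r + 1 := by omega
        rw [this]; simp
      · simp

lemma tail_le (a : ℕ → ℝ) (hdec : Antitone a)
    (ha : ∀ j : ℕ, 1 ≤ j → (Real.log j) ^ 2 / j ≤ a j) (l r : ℕ) :
    ∑ j ∈ Finset.range r, (if 2 ^ (j+1) ≤ l then (0 : ℝ) else ((j : ℝ) + 1) / 2 ^ j) ≤
      8 / (Real.log 2) ^ 2 * a l := by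
  refine (tail_sum l r).trans ?_
  set m := Nat.log 2 l with hm
  have hlt : l < 2 ^ (m+1) := Nat.lt_pow_succ_log_self (by norm_num) l
  have h1 := (ha (2 ^ (m+1)) Nat.one_le_two_pow).trans (hdec hlt.le)
  push_cast at h1
  rw [Real.log_pow] at h1
  push_cast at h1
  have hL : 0 < Real.log 2 := Real.log_pos (by norm_num)
  have h2 : 8 / (Real.log 2) ^ 2 * ((((m : ℝ) + 1) * Real.log 2) ^ 2 / 2 ^ (m+1)) ≤
      8 / (Real.log 2) ^ 2 * a l := mul_le_mul_of_nonneg_left h1 (by positivity)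
  refine le_trans ?_ h2
  have e : 8 / (Real.log 2) ^ 2 * ((((m : ℝ) + 1) * Real.log 2) ^ 2 / 2 ^ (m+1)) =
      4 * ((m : ℝ) + 1) ^ 2 / 2 ^ m := by
    rw [pow_succ]; field_simp; ring
  rw [e]
  have h3 : ((m : ℝ) + 2) * 2 / 2 ^ m ≤ 4 * ((m : ℝ) + 1) ^ 2 / 2 ^ m := by
    apply div_le_div_of_nonneg_right _ (by positivity)
    have : (0 : ℝ) ≤ m := Nat.cast_nonneg m
    nlinarith
  have h4 : 0 ≤ (if m ≤ r then ((r : ℝ) + 2) * 2 / 2 ^ r else ((m : ℝ) + 2) * 2 / 2 ^ m) := by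
    split_ifs <;> positivity
  linarith

/-- The structure of the potential. -/
structure Pot (X₀ : Set (Cfg1 A)) (a : ℕ → ℝ) (φ : Cfg1 A → ℝ) : Prop where
  on : ∀ x ∈ X₀, φ x = 0
  off : ∀ x ∉ X₀, ∃ l : ℕ, (∀ k, Adm X₀ k x ↔ k ≤ l) ∧ φ x = -(a l)

variable {X₀ : Set (Cfg1 A)} {a : ℕ → ℝ} {φ : Cfg1 A → ℝ}

lemma Pot.nonpos (P : Pot X₀ a φ) (hpos : ∀ j, 0 < a j) (x : Cfg1 A) : φ x ≤ 0 := by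
  by_cases hx : x ∈ X₀
  · exact (P.on x hx).le
  · obtain ⟨l, -, h⟩ := P.off x hx
    rw [h]; linarith [hpos l]

lemma Pot.neg (P : Pot X₀ a φ) (hpos : ∀ j, 0 < a j) (x : Cfg1 A) (hx : x ∉ X₀) : φ x < 0 := by
  obtain ⟨l, -, h⟩ := P.off x hx
  rw [h]; linarith [hpos l]

lemma Pot.ge (P : Pot X₀ a φ) (hpos : ∀ j, 0 < a j) (hdec : Antitone a) (x : Cfg1 A) (k : ℕ)
    (hk : Adm X₀ k x) : -(a k) ≤ φ x := by
  by_cases hx : x ∈ X₀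
  · rw [P.on x hx]; linarith [hpos k]
  · obtain ⟨l, hl, h⟩ := P.off x hx
    rw [h]; linarith [hdec ((hl k).1 hk)]

lemma Pot.near (P : Pot X₀ a φ) (hpos : ∀ j, 0 < a j) (hdec : Antitone a) (x y : Cfg1 A) (k : ℕ)
    (hxy : ∀ i < k, y i = x i) : |φ y - φ x| ≤ a k := by
  by_cases hA : Adm X₀ k x
  · have hA' := (adm_congr hxy).1 hA
    have h1 := P.ge hpos hdec x k hA
    have h2 := P.ge hpos hdec y k hA'
    have h3 := P.nonpos hpos x
    have h4 := P.nonpos hpos y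
    rw [abs_le]; constructor <;> linarith
  · have hA' : ¬ Adm X₀ k y := fun h => hA ((adm_congr hxy).2 h)
    obtain ⟨l, hl, h⟩ := P.off x fun hx => hA (adm_of_mem hx)
    obtain ⟨m, hm, h'⟩ := P.off y fun hx => hA' (adm_of_mem hx)
    have hkl : l < k := by by_contra hh; exact hA ((hl k).2 (by omega))
    have hkm : m < k := by by_contra hh; exact hA' ((hm k).2 (by omega))
    have e1 : l ≤ m := (hm l).1 ((adm_congr fun i hi => hxy i (by omega)).1 ((hl l).2 le_rfl))
    have e2 : m ≤ l := (hl m).1 ((adm_congr fun i hi => hxy i (by omega)).2 ((hm m).2 le_rfl))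
    have : l = m := le_antisymm e1 e2
    rw [h, h', this]; simpa using (hpos k).le

lemma Pot.cont (P : Pot X₀ a φ) (hpos : ∀ j, 0 < a j) (hdec : Antitone a)
    (hlim : Tendsto a atTop (𝓝 0)) : Continuous φ := by
  rw [continuous_iff_continuousAt]
  intro x
  rw [ContinuousAt, Metric.tendsto_nhds]
  intro ε hε
  obtain ⟨k, hk⟩ := (hlim.eventually (gt_mem_nhds hε)).exists
  have hc : Continuous (pre k : Cfg1 A → _) := by unfold pre; fun_prop
  have ho : IsOpen (pre k ⁻¹' {pre k x}) := (isOpen_discrete _).preimage hc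
  filter_upwards [ho.mem_nhds rfl] with y hy
  rw [Real.dist_eq]
  refine (P.near hpos hdec x y k fun i hi => ?_).trans_lt hk
  exact congrFun hy ⟨i, hi⟩

lemma Pot.gg_le (P : Pot X₀ a φ) (hdec : Antitone a)
    (ha : ∀ j : ℕ, 1 ≤ j → (Real.log j) ^ 2 / j ≤ a j) (r : ℕ) (x : Cfg1 A) :
    ∑ j ∈ Finset.range r, gg X₀ j x ≤ 8 / (Real.log 2) ^ 2 * (-φ x) := by
  by_cases hx : x ∈ X₀
  · rw [P.on x hx]
    simp [gg, adm_of_mem hx]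
  · obtain ⟨l, hl, h⟩ := P.off x hx
    rw [h, neg_neg]
    refine le_trans (le_of_eq ?_) (tail_le a hdec ha l r)
    refine Finset.sum_congr rfl fun j _ => ?_
    unfold gg
    simp only [hl, NN_eq]

lemma Pot.integrable (P : Pot X₀ a φ) (hpos : ∀ j, 0 < a j) (hdec : Antitone a)
    (hlim : Tendsto a atTop (𝓝 0)) (hne : X₀.Nonempty)
    (μ : Measure (Cfg1 A)) [IsProbabilityMeasure μ] :
    Integrable φ μ ∧ ∫ x, φ x ∂μ ≤ 0 ∧ -(a 0) ≤ ∫ x, φ x ∂μ := by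
  have hA : ∀ x, Adm X₀ 0 x := fun x => by
    obtain ⟨y, hy⟩ := hne
    exact adm_iff.2 ⟨y, hy, fun i hi => absurd hi (Nat.not_lt_zero i)⟩
  have hi : Integrable φ μ := by
    refine Integrable.of_bound (P.cont hpos hdec hlim).measurable.aestronglyMeasurable (a 0)
      (ae_of_all _ fun x => ?_)
    rw [Real.norm_eq_abs, abs_le]
    exact ⟨P.ge hpos hdec x 0 (hA x), (P.nonpos hpos x).trans (hpos 0).le⟩
  refine ⟨hi, integral_nonpos (P.nonpos hpos), ?_⟩
  have := integral_mono (integrable_const (-(a 0))) hi (fun x => P.ge hpos hdec x 0 (hA x))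
  simpa using this

lemma Pot.main (P : Pot X₀ a φ) (hpos : ∀ j, 0 < a j) (hdec : Antitone a)
    (hlim : Tendsto a atTop (𝓝 0)) (hne : X₀.Nonempty)
    (ha : ∀ j : ℕ, 1 ≤ j → (Real.log j) ^ 2 / j ≤ a j)
    (hpoly : ∃ (C : ℝ) (q : ℕ), 0 < C ∧ 1 ≤ q ∧
      ∀ j : ℕ, 1 ≤ j → ((lang1 X₀ j).ncard : ℝ) ≤ C * (j : ℝ) ^ q) :
    ∃ β : ℝ, 0 ≤ β ∧ ∀ μ : Measure (Cfg1 A), IsProbabilityMeasure μ → Invariant1 μ →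
      entropy1 μ + β * ∫ x, φ x ∂μ ≤ 0 := by
  obtain ⟨C, q, hC, -, hp⟩ := hpoly
  set D : ℝ := 4 * (C + Fintype.card A + 1) with hD
  have hD4 : 4 ≤ D := by
    have : (0 : ℝ) ≤ Fintype.card A := Nat.cast_nonneg _
    rw [hD]; linarith
  have hDpos : 0 < D := by linarith
  set γ : ℝ := q + Real.log D with hγd
  have hlogD : 0 ≤ Real.log D := Real.log_nonneg (by linarith)
  have hγ : 0 ≤ γ := by positivity
  have hexp : ∀ r : ℕ, D * 2 ^ (q * r) ≤ Real.exp (γ * (r + 1)) := by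
    intro r
    have : γ * (r + 1) = Real.log D + (q * r : ℕ) * 1 + (q + Real.log D * r) := by
      push_cast; rw [hγd]; ring
    rw [this, Real.exp_add, Real.exp_add, Real.exp_log hDpos, Real.exp_nat_mul]
    have h1 : (1 : ℝ) ≤ Real.exp (q + Real.log D * r) := Real.one_le_exp (by positivity)
    have h2 : (2 : ℝ) ≤ Real.exp 1 := by linarith [Real.add_one_le_exp (1 : ℝ)]
    have h3 : (2 : ℝ) ^ (q * r) ≤ Real.exp 1 ^ (q * r) := pow_le_pow_left₀ (by norm_num) h2 _
    calc D * 2 ^ (q * r) ≤ D * Real.exp 1 ^ (q * r) := by gcongr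
      _ ≤ _ := le_mul_of_one_le_right (by positivity) h1
  have h0 : (Fintype.card A : ℝ) * Real.exp (-γ) ≤ 1 / 2 := by
    have := hexp 0
    simp only [mul_zero, pow_zero, mul_one, Nat.cast_zero, zero_add] at this
    rw [Real.exp_neg, ← div_eq_mul_inv, div_le_iff₀ (Real.exp_pos _)]
    have h2 : (0 : ℝ) ≤ Fintype.card A := Nat.cast_nonneg _
    linarith
  have hL : ∀ r : ℕ, ((lang1 X₀ (NN (r+1))).ncard : ℝ) * Real.exp (-(γ * (r + 2))) ≤ 1 / 4 := by
    intro r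
    have h1 := hexp (r+1)
    have h2 := hp (NN (r+1)) (by rw [NN_eq]; exact Nat.one_le_two_pow)
    have h3 : ((NN (r+1) : ℕ) : ℝ) ^ q = 2 ^ (q * (r+1)) := by
      rw [NN_eq]; push_cast; rw [← pow_mul, mul_comm]
    rw [h3] at h2
    have e : γ * (((r + 1 : ℕ) : ℝ) + 1) = γ * (r + 2) := by push_cast; ring
    rw [e] at h1
    rw [Real.exp_neg, ← div_eq_mul_inv, div_le_iff₀ (Real.exp_pos _)]
    have h4 : (0 : ℝ) < 2 ^ (q * (r+1)) := by positivity
    have h5 : (0 : ℝ) ≤ Fintype.card A := Nat.cast_nonneg _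
    have h6 : 4 * C * 2 ^ (q * (r+1)) ≤ D * 2 ^ (q * (r+1)) := by
      apply mul_le_mul_of_nonneg_right _ h4.le
      rw [hD]; linarith
    linarith
  refine ⟨γ * (8 / (Real.log 2) ^ 2), by positivity, fun μ hμ hinv => ?_⟩
  obtain ⟨hi, -, -⟩ := P.integrable hpos hdec hlim hne μ
  have hr : ∀ r : ℕ, entropy1 μ ≤ γ * (((r : ℝ) + 1) / 2 ^ r) +
      γ * (8 / (Real.log 2) ^ 2 * (-∫ x, φ x ∂μ)) := by
    intro r
    refine (entropy_le_gg X₀ hγ h0 hL hinv r).trans ?_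
    have : ∫ x, ∑ j ∈ Finset.range r, gg X₀ j x ∂μ ≤
        ∫ x, 8 / (Real.log 2) ^ 2 * (-φ x) ∂μ :=
      integral_mono (integrable_finsetSum _ fun j _ => integrable_gg X₀ μ j)
        (hi.neg.const_mul _) (P.gg_le hdec ha r)
    rw [integral_const_mul, integral_neg] at this
    gcongr
  have ht : Tendsto (fun r : ℕ => ((r : ℝ) + 1) / 2 ^ r) atTop (𝓝 0) := by
    have t1 := tendsto_pow_const_div_const_pow_of_one_lt 1 (r := (2 : ℝ)) (by norm_num)
    have t2 := tendsto_pow_const_div_const_pow_of_one_lt 0 (r := (2 : ℝ)) (by norm_num)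
    have := t1.add t2
    simp only [pow_one, pow_zero, add_zero] at this
    refine this.congr fun r => ?_
    rw [add_div]
  have := ge_of_tendsto' ((ht.const_mul γ).add_const
    (γ * (8 / (Real.log 2) ^ 2 * (-∫ x, φ x ∂μ)))) hr
  linarith

lemma entropy_le_card (μ : Measure (Cfg1 A)) [IsProbabilityMeasure μ] :
    entropy1 μ ≤ Fintype.card (Fin 1 → A) := by
  refine (entropy_le μ 1 le_rfl).trans ?_
  calc _ ≤ ((1 : ℕ) : ℝ)⁻¹ * ∑ w : Fin 1 → A, (1 : ℝ) := by
        gcongr with w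
        have h1 := gibbs_term _ 0 (toReal_nn_le μ (cyl1 1 w)).1
        have h2 := (toReal_nn_le μ (cyl1 1 w)).1
        rw [mul_zero, neg_zero, Real.exp_zero] at h1
        linarith
    _ = _ := by simp

lemma bernoulli [Nonempty A] : ∃ μ : Measure (Cfg1 A), IsProbabilityMeasure μ ∧ Invariant1 μ ∧
    entropy1 μ = Real.log (Fintype.card A) := by
  let ν : Measure A := (PMF.uniformOfFintype A).toMeasure
  have hν : IsProbabilityMeasure ν := inferInstance
  have hν1 : ∀ b : A, ν {b} = ((Fintype.card A : ℝ≥0∞))⁻¹ := by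
    intro b
    rw [PMF.toMeasure_apply_singleton _ _ (measurableSet_singleton b)]
    simp
  refine ⟨Measure.infinitePi (fun _ : ℕ => ν), inferInstance, ?_, ?_⟩
  · refine Measure.eq_infinitePi _ fun s t ht => ?_
    rw [Measure.map_apply measurable_shift1
      (MeasurableSet.pi s.countable_toSet fun i _ => ht i)]
    have : (shift1 ⁻¹' (Set.pi (s : Set ℕ) t) : Set (Cfg1 A)) =
        Set.pi ((s.map (addRightEmbedding 1) : Finset ℕ) : Set ℕ) (fun i => t (i - 1)) := by
      ext x
      simp [shift1, Set.mem_pi]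
    rw [this, Measure.infinitePi_pi _ (fun i _ => ht _)]
    simp
  · have hc : (0 : ℝ) < Fintype.card A := by exact_mod_cast Fintype.card_pos
    have hcyl : ∀ n (w : Fin n → A), (Measure.infinitePi (fun _ : ℕ => ν) (cyl1 n w)).toReal =
        ((Fintype.card A : ℝ)⁻¹) ^ n := by
      intro n w
      have : cyl1 n w = Set.pi ((Finset.range n : Finset ℕ) : Set ℕ)
          (fun i => if h : i < n then {w ⟨i, h⟩} else Set.univ) := by
        ext x
        simp only [cyl1, Set.mem_ofPred_eq, Set.mem_pi, Finset.coe_range, Set.mem_Iio]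
        constructor
        · intro h i hi
          rw [dif_pos hi]; exact h ⟨i, hi⟩
        · intro h i
          have := h i i.2
          rw [dif_pos i.2] at this
          exact this
      rw [this, Measure.infinitePi_pi _ (fun i _ => Set.Finite.measurableSet (Set.toFinite _))]
      rw [Finset.prod_congr rfl (g := fun _ => ((Fintype.card A : ℝ≥0∞))⁻¹)]
      · simp
      · intro i hi
        rw [dif_pos (Finset.mem_range.1 hi), hν1]
    unfold entropy1
    have : ∀ n : {n : ℕ // 1 ≤ n}, (n.1 : ℝ)⁻¹ * ∑ w : Fin n.1 → A,
        Real.negMulLog (Measure.infinitePi (fun _ : ℕ => ν) (cyl1 n.1 w)).toReal =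
        Real.log (Fintype.card A) := by
      intro ⟨n, hn⟩
      have hn' : (n : ℝ) ≠ 0 := by positivity
      simp only [hcyl, Finset.sum_const, Finset.card_univ, Fintype.card_fun, Fintype.card_fin,
        nsmul_eq_mul, Real.negMulLog, Real.log_pow, Real.log_inv]
      push_cast
      rw [inv_pow]
      field_simp
    simp only [this]
    have : Nonempty {n : ℕ // 1 ≤ n} := ⟨⟨1, le_rfl⟩⟩
    exact ciInf_const

end Helpers2

/-- **Corollary 5.4.** Let `X₀⁺` be a proper subshift of `X⁺ = 𝒜^ℕ` with at
most polynomial word complexity which is the smallest subshift containing the supports of all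
shift-invariant measures carried by `X₀⁺`. If `(a_j)` is a decreasing positive null sequence
with `a_j ≥ (log j)²/j`, then the potential `φ⁺` (vanishing on `X₀⁺`, equal to `-a_j` where
`dist(x, X₀⁺) = 2^{-j}`) freezes on `X₀⁺`: it has a freezing phase transition at some
`β_c > 0` and `X₀⁺` is the smallest subshift containing the supports of all measures in
`ZTA(φ⁺)`. -/
theorem statement13 (A : Type) [Fintype A] [TopologicalSpace A] [DiscreteTopology A]
    [MeasurableSpace A] [BorelSpace A]
    (X₀ : Set (Cfg1 A)) (hsub : IsSubshift1 X₀) (hproper : X₀ ≠ Set.univ)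
    (hpoly : ∃ (C : ℝ) (q : ℕ), 0 < C ∧ 1 ≤ q ∧
      ∀ j : ℕ, 1 ≤ j → ((lang1 X₀ j).ncard : ℝ) ≤ C * (j : ℝ) ^ q)
    (hsupp : ∀ μ : Measure (Cfg1 A), IsProbabilityMeasure μ → Invariant1 μ → μ X₀ = 1 →
      supp1 μ ⊆ X₀)
    (hsmall : ∀ Z : Set (Cfg1 A), IsSubshift1 Z →
      (∀ μ : Measure (Cfg1 A), IsProbabilityMeasure μ → Invariant1 μ → μ X₀ = 1 →
        supp1 μ ⊆ Z) → X₀ ⊆ Z)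
    (a : ℕ → ℝ) (hpos : ∀ j, 0 < a j) (hdec : Antitone a)
    (hlim : Tendsto a atTop (𝓝 0))
    (ha : ∀ j : ℕ, 1 ≤ j → (Real.log j) ^ 2 / j ≤ a j)
    (φ : Cfg1 A → ℝ)
    (hφ0 : ∀ x ∈ X₀, φ x = 0)
    (hφ1 : ∀ x ∉ X₀, ∀ j : ℕ, distToSub1 X₀ x = (2 : ℝ) ^ (-(j : ℤ)) → φ x = -(a j)) :
    ∃ βc : ℝ, 0 < βc ∧ FreezingPT1 φ βc ∧
      (∀ μ ∈ ZTA1 φ, supp1 μ ⊆ X₀) ∧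
      (∀ Z : Set (Cfg1 A), IsSubshift1 Z → (∀ μ ∈ ZTA1 φ, supp1 μ ⊆ Z) → X₀ ⊆ Z) := by
  obtain ⟨hne, hclosed, hshift⟩ := hsub
  have P : Pot X₀ a φ := by
    refine ⟨hφ0, fun x hx => ?_⟩
    obtain ⟨l, hl, hd⟩ := exists_len hne hclosed hx
    exact ⟨l, hl, hφ1 x hx l hd⟩
  have hmeas : MeasurableSet X₀ := hclosed.measurableSet
  -- two different letters
  obtain ⟨b, c, hbc⟩ : ∃ b c : A, b ≠ c := by
    by_contra hcon
    push Not at hcon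
    apply hproper
    obtain ⟨y, hy⟩ := hne
    refine Set.eq_univ_of_forall fun x => ?_
    have : x = y := funext fun i => hcon _ _
    rwa [this]
  have hnA : Nonempty A := ⟨b⟩
  have hntA : Nontrivial A := ⟨b, c, hbc⟩
  -- an invariant measure on X₀
  obtain ⟨μ₀, hμ₀, hμ₀i, hμ₀X⟩ : ∃ μ : Measure (Cfg1 A), IsProbabilityMeasure μ ∧ Invariant1 μ ∧
      μ X₀ = 1 := by
    by_contra hcon
    have hZ : ∀ d : A, X₀ ⊆ {fun _ => d} := by
      intro d
      refine hsmall _ ⟨⟨_, rfl⟩, isClosed_singleton, ?_⟩ ?_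
      · rintro x rfl; rfl
      · intro μ h1 h2 h3
        exact absurd ⟨μ, h1, h2, h3⟩ hcon
    obtain ⟨y, hy⟩ := hne
    have h1 := congrFun (hZ b hy) 0
    have h2 := congrFun (hZ c hy) 0
    exact hbc (h1.symm.trans h2)
  have hint := fun (μ : Measure (Cfg1 A)) (hμ : IsProbabilityMeasure μ) =>
    P.integrable hpos hdec hlim hne μ
  have hzero : ∀ μ : Measure (Cfg1 A), IsProbabilityMeasure μ →
      (μ X₀ = 1 ↔ ∫ x, φ x ∂μ = 0) := by
    intro μ hμ
    have h1 : ∫ x, φ x ∂μ = 0 ↔ ∫ x, (-φ) x ∂μ = 0 := by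
      simp only [Pi.neg_apply, integral_neg, neg_eq_zero]
    rw [h1, integral_eq_zero_iff_of_nonneg (fun x => by simpa using P.nonpos hpos x)
      (hint μ hμ).1.neg, ← prob_compl_eq_zero_iff hmeas, Filter.EventuallyEq, ae_iff]
    have : {x | ¬ (-φ) x = (0 : Cfg1 A → ℝ) x} = X₀ᶜ := by
      ext x
      by_cases hx : x ∈ X₀
      · simp [hx, P.on x hx]
      · simp [hx, (P.neg hpos x hx).ne]
    rw [this]
  obtain ⟨β₀, hβ₀, hmain⟩ := P.main hpos hdec hlim hne ha hpoly
  have hent0 : ∀ μ : Measure (Cfg1 A), IsProbabilityMeasure μ → Invariant1 μ → μ X₀ = 1 →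
      entropy1 μ = 0 := by
    intro μ hμ hi hX
    have := hmain μ hμ hi
    rw [(hzero μ hμ).1 hX] at this
    linarith [entropy_nonneg μ]
  have hbdd : ∀ β : ℝ, BddAbove { r | ∃ μ : Measure (Cfg1 A), IsProbabilityMeasure μ ∧
      Invariant1 μ ∧ r = entropy1 μ + β * ∫ x, φ x ∂μ } := by
    intro β
    refine ⟨Fintype.card (Fin 1 → A) + |β| * a 0, ?_⟩
    rintro r ⟨μ, hμ, hi, rfl⟩
    have h1 := entropy_le_card μ
    obtain ⟨-, h2, h3⟩ := hint μ hμ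
    have h4 : β * ∫ x, φ x ∂μ ≤ |β| * a 0 := by
      refine (le_abs_self _).trans ?_
      rw [abs_mul]
      refine mul_le_mul_of_nonneg_left ?_ (abs_nonneg _)
      rw [abs_le]; constructor <;> linarith [hpos 0]
    linarith
  have hle : ∀ (β : ℝ) (μ : Measure (Cfg1 A)), IsProbabilityMeasure μ → Invariant1 μ →
      entropy1 μ + β * ∫ x, φ x ∂μ ≤ pressure1 φ β := fun β μ h1 h2 =>
    le_csSup (hbdd β) ⟨μ, h1, h2, rfl⟩
  have hval : ∀ (β : ℝ) (μ : Measure (Cfg1 A)), IsProbabilityMeasure μ → Invariant1 μ → μ X₀ = 1 →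
      entropy1 μ + β * ∫ x, φ x ∂μ = 0 := by
    intro β μ h1 h2 h3
    rw [hent0 μ h1 h2 h3, (hzero μ h1).1 h3]; simp
  have hp0 : ∀ β, 0 ≤ pressure1 φ β := fun β => by
    have := hle β μ₀ hμ₀ hμ₀i
    rwa [hval β μ₀ hμ₀ hμ₀i hμ₀X] at this
  have hanti : ∀ β β' : ℝ, β ≤ β' → pressure1 φ β' ≤ pressure1 φ β := by
    intro β β' hb
    refine csSup_le ⟨_, μ₀, hμ₀, hμ₀i, rfl⟩ ?_
    rintro r ⟨μ, h1, h2, rfl⟩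
    refine le_trans ?_ (hle β μ h1 h2)
    have := (hint μ h1).2.1
    nlinarith
  have hpβ₀ : pressure1 φ β₀ = 0 := by
    refine le_antisymm (csSup_le ⟨_, μ₀, hμ₀, hμ₀i, rfl⟩ ?_) (hp0 _)
    rintro r ⟨μ, h1, h2, rfl⟩
    exact hmain μ h1 h2
  obtain ⟨ν, hν, hνi, hνe⟩ := bernoulli (A := A)
  have hlogA : 0 < Real.log (Fintype.card A) :=
    Real.log_pos (by exact_mod_cast Fintype.one_lt_card)
  set δ : ℝ := Real.log (Fintype.card A) / (2 * a 0) with hδ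
  have ha0 := hpos 0
  have hδpos : 0 < δ := by positivity
  have hpδ : 0 < pressure1 φ δ := by
    refine lt_of_lt_of_le ?_ (hle δ ν hν hνi)
    have h1 := (hint ν hν).2.2
    have h2 : δ * a 0 = Real.log (Fintype.card A) / 2 := by
      rw [hδ]; field_simp
    rw [hνe]
    nlinarith
  set S : Set ℝ := {β | pressure1 φ β = 0} with hS
  have hSlow : ∀ β ∈ S, δ ≤ β := by
    intro β hβ
    by_contra hlt
    have := hanti β δ (by linarith)
    have h0 : pressure1 φ β = 0 := hβ
    linarith
  have hSne : S.Nonempty := ⟨β₀, hpβ₀⟩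
  have hSb : BddBelow S := ⟨δ, hSlow⟩
  have hlt : ∀ β, β < sInf S → 0 < pressure1 φ β := fun β hβ =>
    lt_of_le_of_ne (hp0 β) fun h => notMem_of_lt_csInf hβ hSb h.symm
  have hgt : ∀ β, sInf S < β → ∃ β' < β, pressure1 φ β' = 0 := by
    intro β hβ
    obtain ⟨β', h1, h2⟩ := exists_lt_of_csInf_lt hSne hβ
    exact ⟨β', h2, h1⟩
  have hES : ∀ β, sInf S < β → ∀ μ, μ ∈ ES1 φ β ↔
      (IsProbabilityMeasure μ ∧ Invariant1 μ ∧ μ X₀ = 1) := by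
    intro β hβ μ
    obtain ⟨β', hlt', hβ'⟩ := hgt β hβ
    have hpβ : pressure1 φ β = 0 := le_antisymm (hβ' ▸ hanti β' β hlt'.le) (hp0 β)
    constructor
    · rintro ⟨h1, h2, h3⟩
      refine ⟨h1, h2, (hzero μ h1).2 ?_⟩
      have h4 := hle β' μ h1 h2
      have h5 := (hint μ h1).2.1
      rw [hβ'] at h4
      rw [hpβ] at h3
      apply le_antisymm h5
      by_contra hneg
      push Not at hneg
      nlinarith
    · rintro ⟨h1, h2, h3⟩
      exact ⟨h1, h2, by rw [hval β μ h1 h2 h3, hpβ]⟩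
  refine ⟨sInf S, hδpos.trans_le (le_csInf hSne hSlow), ⟨?_, ?_⟩, ?_, ?_⟩
  · intro β β' h1 h2
    ext μ
    rw [hES β h1, hES β' h2]
  · intro β β' h1 h2 heq
    have h3 : μ₀ ∈ ES1 φ β := heq ▸ (hES β' h2 μ₀).2 ⟨hμ₀, hμ₀i, hμ₀X⟩
    have h4 := h3.2.2
    rw [hval β μ₀ hμ₀ hμ₀i hμ₀X] at h4
    exact (hlt β h1).ne h4
  · rintro μ ⟨h1, h2, βs, μs, hβs, hμs, hconv⟩
    refine hsupp μ h1 h2 ((hzero μ h1).2 ?_)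
    have h3 := hconv φ (P.cont hpos hdec hlim)
    refine tendsto_nhds_unique h3 (tendsto_const_nhds.congr' ?_)
    filter_upwards [hβs.eventually_gt_atTop (sInf S)] with k hk
    obtain ⟨h4, -, h5⟩ := (hES _ hk _).1 (hμs k)
    exact ((hzero _ h4).1 h5).symm
  · intro Z hZ hall
    refine hsmall Z hZ fun μ h1 h2 h3 => hall μ ⟨h1, h2, fun k => sInf S + 1 + k, fun _ => μ, ?_, ?_,
      fun f _ => tendsto_const_nhds⟩
    · exact tendsto_atTop_add_const_left _ _ tendsto_natCast_atTop_atTop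
    · intro k
      refine (hES _ ?_ μ).2 ⟨h1, h2, h3⟩
      have : (0 : ℝ) ≤ k := Nat.cast_nonneg k
      linarith

end Freezing
end

section
/- Let φ : X → ℝ be continuous on X = 𝒜^(ℤ^d). Then the pressure function has the slant asymptote β ↦ s_φ β + h_φ at +∞: lim_{β→+∞} ( p_φ(β) − (s_φ β + h_φ) ) = 0. -/
open MeasureTheory Filter Topology
open scoped ENNReal Classical

namespace Freezing

/-- The configuration space `X = 𝒜^(ℤ^d)`. -/
abbrev Cfg (d : ℕ) (A : Type) : Type := (Fin d → ℤ) → A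

section Defs

variable {d : ℕ} {A : Type} [Fintype A] [TopologicalSpace A] [DiscreteTopology A]
  [MeasurableSpace A] [BorelSpace A]

/-- The shift action: `(σ^n x)_m = x_{n+m}`. -/
def shift (n : Fin d → ℤ) (x : Cfg d A) : Cfg d A := fun m => x (n + m)

/-- Shift-invariance of a measure. -/
def Invariant (μ : Measure (Cfg d A)) : Prop :=
  ∀ n : Fin d → ℤ, Measure.map (shift n) μ = μ

/-- Cylinder set `[w]` for a pattern `w` on `E_n = ([0,n-1] ∩ ℤ)^d`. -/
def cylE (n : ℕ) (w : (Fin d → Fin n) → A) : Set (Cfg d A) :=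
  { x | ∀ m : Fin d → Fin n, x (fun i => ((m i : ℕ) : ℤ)) = w m }

/-- Measure-theoretic entropy `h(μ) = inf_{n ≥ 1} n^{-d} Σ_w (-μ[w] log μ[w])`. -/
noncomputable def entropy (μ : Measure (Cfg d A)) : ℝ :=
  ⨅ n : {n : ℕ // 1 ≤ n},
    ((n.1 : ℝ) ^ d)⁻¹ *
      ∑ w : (Fin d → Fin n.1) → A, Real.negMulLog (μ (cylE n.1 w)).toReal

/-- Pressure `p_φ(β) = sup { h(μ) + β ∫ φ dμ }` over shift-invariant probability measures. -/
noncomputable def pressure (φ : Cfg d A → ℝ) (β : ℝ) : ℝ :=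
  sSup { r | ∃ μ : Measure (Cfg d A), IsProbabilityMeasure μ ∧ Invariant μ ∧
    r = entropy μ + β * ∫ x, φ x ∂μ }

/-- The set of equilibrium states of `βφ`. -/
def ES (φ : Cfg d A → ℝ) (β : ℝ) : Set (Measure (Cfg d A)) :=
  { μ | IsProbabilityMeasure μ ∧ Invariant μ ∧
      entropy μ + β * ∫ x, φ x ∂μ = pressure φ β }

/-- `φ` has a freezing phase transition at `βc`. -/
def FreezingPT (φ : Cfg d A → ℝ) (βc : ℝ) : Prop :=
  (∀ β β' : ℝ, βc < β → βc < β' → ES φ β = ES φ β') ∧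
  (∀ β β' : ℝ, β < βc → βc < β' → ES φ β ≠ ES φ β')

/-- `s_φ = sup { ∫ φ dμ }` over shift-invariant probability measures. -/
noncomputable def sPhi (φ : Cfg d A → ℝ) : ℝ :=
  sSup { r | ∃ μ : Measure (Cfg d A), IsProbabilityMeasure μ ∧ Invariant μ ∧
    r = ∫ x, φ x ∂μ }

/-- The set of maximizing measures of `φ`. -/
def MM (φ : Cfg d A → ℝ) : Set (Measure (Cfg d A)) :=
  { μ | IsProbabilityMeasure μ ∧ Invariant μ ∧ (∫ x, φ x ∂μ) = sPhi φ }

/-- `h_φ = sup { h(η) : η ∈ MM(φ) }`. -/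
noncomputable def hPhi (φ : Cfg d A → ℝ) : ℝ :=
  sSup { r | ∃ μ ∈ MM φ, r = entropy μ }

/-- The zero-temperature accumulation points of `φ`. -/
def ZTA (φ : Cfg d A → ℝ) : Set (Measure (Cfg d A)) :=
  { μ | IsProbabilityMeasure μ ∧ Invariant μ ∧
      ∃ (β : ℕ → ℝ) (μs : ℕ → Measure (Cfg d A)),
        Tendsto β atTop atTop ∧ (∀ k, μs k ∈ ES φ (β k)) ∧
        ∀ f : Cfg d A → ℝ, Continuous f →
          Tendsto (fun k => ∫ x, f x ∂(μs k)) atTop (𝓝 (∫ x, f x ∂μ)) }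

/-- A subshift: nonempty, closed, invariant under every shift. -/
def IsSubshift (X₀ : Set (Cfg d A)) : Prop :=
  X₀.Nonempty ∧ IsClosed X₀ ∧ ∀ n : Fin d → ℤ, ∀ x ∈ X₀, shift n x ∈ X₀

/-- The language `L_{E_n}(X₀)`: patterns on `E_n` appearing at the origin of points of `X₀`. -/
def langE (X₀ : Set (Cfg d A)) (n : ℕ) : Set ((Fin d → Fin n) → A) :=
  { w | ∃ x ∈ X₀, ∀ m : Fin d → Fin n, x (fun i => ((m i : ℕ) : ℤ)) = w m }

/-- Topological entropy `h_top(X₀) = inf_{n ≥ 1} n^{-d} log |L_{E_n}(X₀)|`. -/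
noncomputable def topEnt (X₀ : Set (Cfg d A)) : ℝ :=
  ⨅ n : {n : ℕ // 1 ≤ n}, ((n.1 : ℝ) ^ d)⁻¹ * Real.log ((langE X₀ n.1).ncard)

/-- A measure of maximal entropy on the subshift `X₀`. -/
def IsMME (X₀ : Set (Cfg d A)) (μ : Measure (Cfg d A)) : Prop :=
  IsProbabilityMeasure μ ∧ Invariant μ ∧ μ X₀ = 1 ∧ entropy μ = topEnt X₀

/-- Ergodicity: invariant Borel sets have measure `0` or `1`. -/
def ErgodicInv (μ : Measure (Cfg d A)) : Prop :=
  ∀ s : Set (Cfg d A), MeasurableSet s → (∀ n : Fin d → ℤ, shift n ⁻¹' s = s) →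
    μ s = 0 ∨ μ s = 1

/-- The `n`-th variation `var_n φ`, over pairs agreeing on `B_n = ([-n,n] ∩ ℤ)^d`. -/
noncomputable def varPot (φ : Cfg d A → ℝ) (n : ℕ) : ℝ :=
  sSup { r | ∃ x y : Cfg d A,
    (∀ m : Fin d → ℤ, (∀ i, |m i| ≤ (n : ℤ)) → x m = y m) ∧ r = |φ x - φ y| }

/-- Sup-norm `‖m‖_∞` of a site `m ∈ ℤ^d`. -/
def supNorm (m : Fin d → ℤ) : ℕ := Finset.univ.sup fun i => (m i).natAbs

/-- The metric `dist(x,y) = 2^{-min{‖n‖_∞ : x_n ≠ y_n}}`. -/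
noncomputable def cfgDist (x y : Cfg d A) : ℝ :=
  if x = y then 0
  else (2 : ℝ) ^
    (-((sInf { k : ℕ | ∃ m : Fin d → ℤ, supNorm m = k ∧ x m ≠ y m } : ℕ) : ℤ))

/-- Distance from a point to a subshift. -/
noncomputable def distToSub (X₀ : Set (Cfg d A)) (x : Cfg d A) : ℝ :=
  sInf { r | ∃ y ∈ X₀, r = cfgDist x y }

end Defs

section Helpers

variable {d : ℕ} {A : Type} [Fintype A] [TopologicalSpace A] [DiscreteTopology A]
  [MeasurableSpace A] [BorelSpace A]

/-- Normalised block entropy. -/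
noncomputable def blockEnt (n : ℕ) (μ : Measure (Cfg d A)) : ℝ :=
  ((n : ℝ) ^ d)⁻¹ * ∑ w : (Fin d → Fin n) → A, Real.negMulLog (μ (cylE n w)).toReal

lemma isClopen_cylE (n : ℕ) (w : (Fin d → Fin n) → A) : IsClopen (cylE n w) := by
  have : cylE n w = ⋂ m : Fin d → Fin n,
      (fun x : Cfg d A => x (fun i => ((m i : ℕ) : ℤ))) ⁻¹' {w m} := by
    ext x; simp [cylE]
  rw [this]
  exact isClopen_iInter_of_finite fun m => (isClopen_discrete _).preimage (continuous_apply _)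

lemma continuous_blockEnt (n : ℕ) :
    Continuous fun μ : ProbabilityMeasure (Cfg d A) => blockEnt n (μ : Measure (Cfg d A)) := by
  unfold blockEnt
  refine continuous_const.mul (continuous_finsetSum _ fun w _ => Real.continuous_negMulLog.comp ?_)
  rw [continuous_iff_continuousAt]
  intro μ
  have h := ProbabilityMeasure.tendsto_measure_of_null_frontier_of_tendsto
    (tendsto_id (α := ProbabilityMeasure (Cfg d A)) (x := 𝓝 μ)) (E := cylE n w)
    (by rw [(isClopen_cylE n w).frontier_eq]; simp)
  exact (NNReal.continuous_coe.tendsto _).comp h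

lemma blockEnt_nonneg (n : ℕ) (μ : Measure (Cfg d A)) [IsProbabilityMeasure μ] :
    0 ≤ blockEnt n μ := by
  refine mul_nonneg (by positivity) (Finset.sum_nonneg fun w _ => ?_)
  exact Real.negMulLog_nonneg ENNReal.toReal_nonneg measureReal_le_one

lemma bddBelow_blockEnt (μ : Measure (Cfg d A)) [IsProbabilityMeasure μ] :
    BddBelow (Set.range fun n : {n : ℕ // 1 ≤ n} => blockEnt n.1 μ) :=
  ⟨0, by rintro _ ⟨n, rfl⟩; exact blockEnt_nonneg _ _⟩

lemma le_entropy_iff (μ : Measure (Cfg d A)) [IsProbabilityMeasure μ] (c : ℝ) :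
    c ≤ entropy μ ↔ ∀ n : {n : ℕ // 1 ≤ n}, c ≤ blockEnt n.1 μ := by
  haveI : Nonempty {n : ℕ // 1 ≤ n} := ⟨⟨1, le_rfl⟩⟩
  exact le_ciInf_iff (bddBelow_blockEnt μ)

lemma exists_entropy_le : ∃ C : ℝ, ∀ μ : Measure (Cfg d A), IsProbabilityMeasure μ →
    entropy μ ≤ C := by
  obtain ⟨C, hC⟩ := (isCompact_univ.image (continuous_blockEnt (d := d) (A := A) 1)).bddAbove
  refine ⟨C, fun μ hμ => ?_⟩
  exact ((le_entropy_iff μ _).1 le_rfl ⟨1, le_rfl⟩).trans (hC ⟨⟨μ, hμ⟩, trivial, rfl⟩)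

lemma continuous_shift (n : Fin d → ℤ) : Continuous (shift (A := A) n) :=
  continuous_pi fun _ => continuous_apply _

lemma isClosed_invariant :
    IsClosed {μ : ProbabilityMeasure (Cfg d A) | Invariant (μ : Measure (Cfg d A))} := by
  have : {μ : ProbabilityMeasure (Cfg d A) | Invariant (μ : Measure (Cfg d A))} =
      ⋂ n : Fin d → ℤ, {μ : ProbabilityMeasure (Cfg d A) |
        μ.map (continuous_shift n).measurable.aemeasurable = μ} := by
    ext μ
    simp only [Set.mem_ofPred_eq, Set.mem_iInter, Invariant]
    refine forall_congr' fun n => ?_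
    exact ⟨fun h => Subtype.ext h, fun h => congrArg Subtype.val h⟩
  rw [this]
  exact isClosed_iInter fun n =>
    isClosed_eq (ProbabilityMeasure.continuous_map (continuous_shift n)) continuous_id

lemma exists_invariant [Nonempty A] :
    ∃ μ : Measure (Cfg d A), IsProbabilityMeasure μ ∧ Invariant μ := by
  obtain ⟨a⟩ := ‹Nonempty A›
  refine ⟨Measure.dirac (fun _ => a), inferInstance, fun n => ?_⟩
  rw [Measure.map_dirac' (continuous_shift n).measurable]
  rfl

lemma continuous_int (φ : Cfg d A → ℝ) (hφ : Continuous φ) :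
    Continuous fun μ : ProbabilityMeasure (Cfg d A) => ∫ x, φ x ∂(μ : Measure (Cfg d A)) :=
  ProbabilityMeasure.continuous_integral_continuousMap (⟨φ, hφ⟩ : C(Cfg d A, ℝ))

lemma bddAbove_int (φ : Cfg d A → ℝ) (hφ : Continuous φ) :
    BddAbove { r | ∃ μ : Measure (Cfg d A), IsProbabilityMeasure μ ∧ Invariant μ ∧
      r = ∫ x, φ x ∂μ } := by
  obtain ⟨C, hC⟩ := (isCompact_univ.image (continuous_int φ hφ)).bddAbove
  refine ⟨C, ?_⟩
  rintro _ ⟨μ, hμ, -, rfl⟩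
  exact hC ⟨⟨μ, hμ⟩, trivial, rfl⟩

lemma int_le_sPhi (φ : Cfg d A → ℝ) (hφ : Continuous φ) (μ : Measure (Cfg d A))
    (h : IsProbabilityMeasure μ) (hi : Invariant μ) : ∫ x, φ x ∂μ ≤ sPhi φ :=
  le_csSup (bddAbove_int φ hφ) ⟨μ, h, hi, rfl⟩

lemma exists_MM [Nonempty A] (φ : Cfg d A → ℝ) (hφ : Continuous φ) : ∃ μ, μ ∈ MM φ := by
  obtain ⟨ν, hν, hνi⟩ := exists_invariant (d := d) (A := A)
  obtain ⟨μ, hμ, hmax⟩ := isClosed_invariant.isCompact.exists_isMaxOn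
    (s := {μ : ProbabilityMeasure (Cfg d A) | Invariant (μ : Measure (Cfg d A))})
    ⟨⟨ν, hν⟩, hνi⟩ (continuous_int φ hφ).continuousOn
  refine ⟨μ, inferInstance, hμ, le_antisymm (int_le_sPhi φ hφ _ inferInstance hμ) ?_⟩
  refine csSup_le ⟨_, ν, hν, hνi, rfl⟩ ?_
  rintro _ ⟨η, hη, hηi, rfl⟩
  exact hmax (show (⟨η, hη⟩ : ProbabilityMeasure (Cfg d A)) ∈ _ from hηi)

lemma entropy_le_hPhi (φ : Cfg d A → ℝ) (μ) (hμ : μ ∈ MM φ) : entropy μ ≤ hPhi φ := by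
  obtain ⟨C, hC⟩ := exists_entropy_le (d := d) (A := A)
  refine le_csSup ⟨C, ?_⟩ ⟨μ, hμ, rfl⟩
  rintro _ ⟨η, hη, rfl⟩
  exact hC η hη.1

lemma lower [Nonempty A] (φ : Cfg d A → ℝ) (hφ : Continuous φ) (β : ℝ) (hβ : 0 ≤ β) :
    sPhi φ * β + hPhi φ ≤ pressure φ β := by
  obtain ⟨C, hC⟩ := exists_entropy_le (d := d) (A := A)
  obtain ⟨ν, hν⟩ := exists_MM φ hφ
  have : hPhi φ ≤ pressure φ β - sPhi φ * β := by
    refine csSup_le ⟨_, ν, hν, rfl⟩ ?_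
    rintro _ ⟨η, hη, rfl⟩
    have : entropy η + β * ∫ x, φ x ∂η ≤ pressure φ β := by
      refine le_csSup ⟨C + β * sPhi φ, ?_⟩ ⟨η, hη.1, hη.2.1, rfl⟩
      rintro _ ⟨μ, hμ, hμi, rfl⟩
      exact add_le_add (hC μ hμ) (mul_le_mul_of_nonneg_left (int_le_sPhi φ hφ μ hμ hμi) hβ)
    rw [hη.2.2] at this
    linarith
  linarith

lemma upper [Nonempty A] (φ : Cfg d A → ℝ) (hφ : Continuous φ) (ε : ℝ) (hε : 0 < ε) :
    ∃ N : ℕ, ∀ β : ℝ, (N : ℝ) ≤ β → pressure φ β ≤ sPhi φ * β + hPhi φ + ε := by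
  obtain ⟨C, hC⟩ := exists_entropy_le (d := d) (A := A)
  let K : ℕ → Set (ProbabilityMeasure (Cfg d A)) := fun N =>
    {μ | Invariant (μ : Measure (Cfg d A)) ∧
      hPhi φ + ε - N * (∫ x, φ x ∂(μ : Measure (Cfg d A)) - sPhi φ) ≤
        entropy (μ : Measure (Cfg d A))}
  have hKc : ∀ N, IsClosed (K N) := by
    intro N
    have : K N = {μ : ProbabilityMeasure (Cfg d A) | Invariant (μ : Measure (Cfg d A))} ∩ ⋂ n : {n : ℕ // 1 ≤ n},
        {μ : ProbabilityMeasure (Cfg d A) | hPhi φ + ε - N * (∫ x, φ x ∂(μ : Measure (Cfg d A)) - sPhi φ) ≤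
          blockEnt n.1 (μ : Measure (Cfg d A))} := by
      ext μ
      simp only [K, Set.mem_ofPred_eq, Set.mem_inter_iff, Set.mem_iInter, le_entropy_iff]
    rw [this]
    refine isClosed_invariant.inter (isClosed_iInter fun n => ?_)
    exact isClosed_le (continuous_const.sub (continuous_const.mul
      ((continuous_int φ hφ).sub continuous_const))) (continuous_blockEnt _)
  by_cases hne : ∀ N, (K N).Nonempty
  · exfalso
    obtain ⟨μ, hμ⟩ := IsCompact.nonempty_iInter_of_sequence_nonempty_isCompact_isClosed K
      (by
        rintro N μ ⟨hi, h⟩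
        refine ⟨hi, le_trans ?_ h⟩
        have := int_le_sPhi φ hφ (μ : Measure (Cfg d A)) inferInstance hi
        push_cast
        linarith) hne (hKc 0).isCompact hKc
    rw [Set.mem_iInter] at hμ
    have hi := (hμ 0).1
    have hle := int_le_sPhi φ hφ (μ : Measure (Cfg d A)) inferInstance hi
    have hent := hC (μ : Measure (Cfg d A)) inferInstance
    have heq : ∫ x, φ x ∂(μ : Measure (Cfg d A)) = sPhi φ := by
      by_contra hn
      have hlt : 0 < sPhi φ - ∫ x, φ x ∂(μ : Measure (Cfg d A)) :=
        sub_pos.2 (lt_of_le_of_ne hle hn)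
      obtain ⟨N, hN⟩ := Archimedean.arch (C - hPhi φ) hlt
      rw [nsmul_eq_mul] at hN
      have := (hμ N).2
      linarith
    have h0 := (hμ 0).2
    have := entropy_le_hPhi φ (μ : Measure (Cfg d A)) ⟨inferInstance, hi, heq⟩
    simp at h0
    linarith
  · push Not at hne
    obtain ⟨N, hN⟩ := hne
    refine ⟨N, fun β hβ => ?_⟩
    obtain ⟨ν, hν, hνi⟩ := exists_invariant (d := d) (A := A)
    refine csSup_le ⟨_, ν, hν, hνi, rfl⟩ ?_
    rintro _ ⟨μ, hμ, hμi, rfl⟩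
    have hle := int_le_sPhi φ hφ μ hμ hμi
    have h1 : entropy μ < hPhi φ + ε - N * (∫ x, φ x ∂μ - sPhi φ) := by
      by_contra hcon
      have : (⟨μ, hμ⟩ : ProbabilityMeasure (Cfg d A)) ∈ K N := ⟨hμi, not_lt.1 hcon⟩
      rw [hN] at this
      exact this
    nlinarith

end Helpers

/-- **Theorem 6.3 (ii).** The pressure function has the slant asymptote
`β ↦ s_φ β + h_φ` at `+∞`. -/
theorem statement15 (d : ℕ) (hd : 1 ≤ d) (A : Type) [Fintype A] [TopologicalSpace A]
    [DiscreteTopology A] [MeasurableSpace A] [BorelSpace A]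
    (φ : Cfg d A → ℝ) (hφ : Continuous φ) :
    Tendsto (fun β : ℝ => pressure φ β - (sPhi φ * β + hPhi φ)) atTop (𝓝 0) := by
  rcases isEmpty_or_nonempty A with hA | hA
  · haveI : IsEmpty (Cfg d A) := ⟨fun x => hA.elim (x 0)⟩
    have hno : ∀ μ : Measure (Cfg d A), ¬ IsProbabilityMeasure μ := by
      intro μ h
      have h1 := h.measure_univ
      rw [Set.univ_eq_empty_iff.2 this, measure_empty] at h1
      exact zero_ne_one h1
    have h : (fun β : ℝ => pressure φ β - (sPhi φ * β + hPhi φ)) = fun _ => 0 := by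
      funext β
      simp [pressure, sPhi, hPhi, MM, hno]
    rw [h]
    exact tendsto_const_nhds
  · rw [Metric.tendsto_atTop]
    intro ε hε
    obtain ⟨N, hN⟩ := upper φ hφ (ε / 2) (half_pos hε)
    refine ⟨N, fun β hβ => ?_⟩
    have h1 := hN β hβ
    have h2 := lower φ hφ β ((Nat.cast_nonneg N).trans hβ)
    rw [Real.dist_eq, abs_lt]
    constructor <;> linarith

end Freezing
end
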